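/- Let c ∈ ℂ with Re c > 0 and let x, y be positive real numbers. Then Γ(c) U(c, 2c, x+y) = (1/(4π)) ∫_{−∞}^{∞} Γ((c−it)/2) Γ((c+it)/2) U((c−it)/2, c, x) U((c+it)/2, c, y) dt. Equivalently, in purely integral form: ∫₀^∞ e^{−(x+y)u} u^{c−1} (1+u)^{c−1} du = (1/(4π)) ∫_ℝ (∫₀^∞ e^{−xu} u^{(c−it)/2−1} (1+u)^{(c+it)/2−1} du) (∫₀^∞ e^{−yu} u^{(c+it)/2−1} (1+u)^{(c−it)/2−1} du) dt. -/

import Mathlib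

/-- Confluent hypergeometric function of the second kind via its Laplace-transform
representation, valid for `Re a > 0`, `Re z > 0` (principal branch powers). -/
noncomputable def hypU (a b z : ℂ) : ℂ :=
  (Complex.Gamma a)⁻¹ *
    ∫ t in Set.Ioi (0 : ℝ), Complex.exp (-z * t) * (t : ℂ) ^ (a - 1) * ((1 : ℂ) + t) ^ (b - a - 1)

open MeasureTheory FourierTransform

namespace Magnus

noncomputable def uu (s : ℝ) : ℝ := (Real.exp s - 1)⁻¹

lemma exp_sub_pos {s : ℝ} (hs : 0 < s) : 0 < Real.exp s - 1 := by
  have := Real.add_one_lt_exp hs.ne'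
  linarith

lemma uu_pos {s : ℝ} (hs : 0 < s) : 0 < uu s := inv_pos.mpr (exp_sub_pos hs)

lemma one_add_uu {s : ℝ} (hs : 0 < s) : 1 + uu s = Real.exp s * uu s := by
  have := (exp_sub_pos hs).ne'
  unfold uu
  field_simp
  ring

lemma log_one_add_uu {s : ℝ} (hs : 0 < s) : Real.log (1 + uu s) = s + Real.log (uu s) := by
  rw [one_add_uu hs, Real.log_mul (Real.exp_pos s).ne' (uu_pos hs).ne', Real.log_exp]

lemma one_le_mul {s : ℝ} (hs : 0 < s) : 1 ≤ s * (1 + uu s) := by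
  have h := Real.log_le_sub_one_of_pos (x := uu s / (1 + uu s))
    (div_pos (uu_pos hs) (by linarith [uu_pos hs]))
  have h1 : (0 : ℝ) < 1 + uu s := by linarith [uu_pos hs]
  rw [Real.log_div (uu_pos hs).ne' h1.ne', log_one_add_uu hs] at h
  have h2 : uu s / (1 + uu s) - 1 = - (1 / (1 + uu s)) := by field_simp; ring
  rw [h2] at h
  have h3 : 1 / (1 + uu s) ≤ s := by linarith
  rwa [div_le_iff₀ h1] at h3

lemma hasDerivAt_uu {s : ℝ} (hs : 0 < s) :
    HasDerivAt uu (-(uu s * (1 + uu s))) s := by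
  have h := ((Real.hasDerivAt_exp s).sub_const 1).inv (exp_sub_pos hs).ne'
  refine HasDerivAt.congr_deriv (f := uu) h ?_
  rw [one_add_uu hs]
  unfold uu
  have := (exp_sub_pos hs).ne'
  field_simp

lemma uu_injOn : Set.InjOn uu (Set.Ioi 0) := by
  intro s hs t ht h
  have := inv_injective h
  exact Real.exp_injective (by linarith)

lemma uu_image : uu '' Set.Ioi 0 = Set.Ioi 0 := by
  ext u
  constructor
  · rintro ⟨s, hs, rfl⟩
    exact uu_pos hs
  · intro hu
    have hu' : (0 : ℝ) < u := hu
    have h1 : (1 : ℝ) < 1 + u⁻¹ := by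
      have := inv_pos.mpr hu'
      linarith
    refine ⟨Real.log (1 + u⁻¹), Real.log_pos h1, ?_⟩
    unfold uu
    rw [Real.exp_log (by linarith)]
    simp

lemma change_var (g : ℝ → ℂ) :
    ∫ u in Set.Ioi (0 : ℝ), g u =
      ∫ s in Set.Ioi (0 : ℝ), ((uu s * (1 + uu s) : ℝ) : ℂ) * g (uu s) := by
  have h := integral_image_eq_integral_abs_deriv_smul (s := Set.Ioi (0 : ℝ)) (f := uu)
    (f' := fun s => -(uu s * (1 + uu s))) measurableSet_Ioi
    (fun s hs => (hasDerivAt_uu hs).hasDerivWithinAt) uu_injOn g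
  rw [uu_image] at h
  rw [h]
  refine setIntegral_congr_fun measurableSet_Ioi fun s hs => ?_
  have hu := uu_pos hs
  have : 0 < uu s * (1 + uu s) := by positivity
  simp only [abs_neg, abs_of_pos this, Complex.real_smul]

noncomputable def phi (x : ℝ) (a : ℂ) (s : ℝ) : ℂ :=
  Complex.exp (-x * uu s + a * ((Real.log (uu s) + Real.log (1 + uu s) : ℝ) : ℂ))

noncomputable def G (x : ℝ) (a : ℂ) (P : Polynomial ℂ) (s : ℝ) : ℂ :=
  if 0 < s then P.eval (uu s : ℂ) * phi x a s else 0

lemma norm_phi (x : ℝ) (a : ℂ) {s : ℝ} (hs : 0 < s) :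
    ‖phi x a s‖ = Real.exp (-x * uu s + 2 * a.re * Real.log (1 + uu s)) *
      Real.exp (-a.re * s) := by
  unfold phi
  rw [Complex.norm_exp, ← Real.exp_add, log_one_add_uu hs]
  congr 1
  simp [-Complex.ofReal_add]
  ring

lemma exp_bound {x : ℝ} (hx : 0 < x) {β : ℝ} (hβ : 0 < β) :
    ∃ C : ℝ, 0 ≤ C ∧ ∀ u : ℝ, 0 < u → Real.exp (-x * u + β * Real.log (1 + u)) ≤ C := by
  refine ⟨Real.exp (x + β * (Real.log (β / x) - 1)), (Real.exp_pos _).le, fun u hu => ?_⟩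
  apply Real.exp_le_exp.mpr
  have h1 : (0 : ℝ) < 1 + u := by linarith
  have h := Real.log_le_sub_one_of_pos (x := x * (1 + u) / β) (by positivity)
  rw [Real.log_div (by positivity) hβ.ne', Real.log_mul hx.ne' h1.ne'] at h
  rw [Real.log_div hβ.ne' hx.ne']
  have h2 := mul_le_mul_of_nonneg_left h hβ.le
  have h3 : β * (x * (1 + u) / β - 1) = x * (1 + u) - β := by field_simp
  rw [h3] at h2
  linarith

lemma poly_bound {x : ℝ} (hx : 0 < x) (P : Polynomial ℂ) :
    ∀ {β : ℝ}, 0 < β → ∃ C : ℝ, 0 ≤ C ∧ ∀ u : ℝ, 0 < u →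
      ‖P.eval (u : ℂ)‖ * Real.exp (-x * u + β * Real.log (1 + u)) ≤ C := by
  intro β hβ
  induction P using Polynomial.induction_on' with
  | add p q hp hq =>
    obtain ⟨C, hC, h⟩ := hp
    obtain ⟨D, hD, h'⟩ := hq
    refine ⟨C + D, by positivity, fun u hu => ?_⟩
    rw [Polynomial.eval_add]
    calc _ ≤ (‖p.eval (u : ℂ)‖ + ‖q.eval (u : ℂ)‖) * Real.exp (-x * u + β * Real.log (1 + u)) := by
          gcongr
          exact norm_add_le _ _
      _ ≤ _ := by
          rw [add_mul]
          exact add_le_add (h u hu) (h' u hu)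
  | monomial n b =>
    obtain ⟨C, hC, h⟩ := exp_bound hx (β := β + n) (by positivity)
    refine ⟨‖b‖ * C, by positivity, fun u hu => ?_⟩
    have h1 : (0 : ℝ) < 1 + u := by linarith
    have h2 : Real.exp (-x * u + (β + n) * Real.log (1 + u)) =
        (1 + u) ^ n * Real.exp (-x * u + β * Real.log (1 + u)) := by
      have : (1 + u) ^ n = Real.exp (n * Real.log (1 + u)) := by
        rw [Real.exp_nat_mul, Real.exp_log h1]
      rw [this, ← Real.exp_add]
      congr 1
      ring
    have h3 := h u hu
    rw [h2] at h3
    rw [Polynomial.eval_monomial, norm_mul, norm_pow, Complex.norm_real, Real.norm_eq_abs,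
      abs_of_pos hu, mul_assoc]
    refine mul_le_mul_of_nonneg_left (le_trans ?_ h3) (norm_nonneg _)
    gcongr
    linarith

lemma G_bound {x : ℝ} (hx : 0 < x) {a : ℂ} (ha : 0 < a.re) (P : Polynomial ℂ) :
    ∃ C : ℝ, 0 ≤ C ∧ ∀ s : ℝ, 0 < s → ‖G x a P s‖ ≤ C * Real.exp (-a.re * s) := by
  obtain ⟨C, hC, h⟩ := poly_bound hx P (β := 2 * a.re) (by positivity)
  refine ⟨C, hC, fun s hs => ?_⟩
  rw [G, if_pos hs, norm_mul, norm_phi x a hs, ← mul_assoc]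
  exact mul_le_mul_of_nonneg_right (h _ (uu_pos hs)) (Real.exp_pos _).le

lemma G_bound_sq {x : ℝ} (hx : 0 < x) {a : ℂ} (ha : 0 < a.re) (P : Polynomial ℂ) :
    ∃ C : ℝ, ∀ s : ℝ, ‖G x a P s‖ ≤ C * s ^ 2 := by
  obtain ⟨C, hC, h⟩ := G_bound hx ha ((1 + Polynomial.X) ^ 2 * P)
  refine ⟨C, fun s => ?_⟩
  by_cases hs : 0 < s
  · have h1 := h s hs
    have h2 : G x a ((1 + Polynomial.X) ^ 2 * P) s = (((1 + uu s) ^ 2 : ℝ) : ℂ) * G x a P s := by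
      simp [G, hs]
      ring
    have h4 : Real.exp (-a.re * s) ≤ 1 := Real.exp_le_one_iff.mpr (by nlinarith)
    rw [h2, norm_mul, Complex.norm_real, Real.norm_eq_abs, abs_of_nonneg (sq_nonneg _)] at h1
    have h3 : (1 + uu s) ^ 2 * ‖G x a P s‖ ≤ C := h1.trans (by nlinarith)
    have h5 : 1 ≤ (s * (1 + uu s)) ^ 2 := one_le_pow₀ (one_le_mul hs)
    calc ‖G x a P s‖ ≤ (s * (1 + uu s)) ^ 2 * ‖G x a P s‖ :=
          le_mul_of_one_le_left (norm_nonneg _) h5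
      _ = s ^ 2 * ((1 + uu s) ^ 2 * ‖G x a P s‖) := by ring
      _ ≤ s ^ 2 * C := by gcongr
      _ = _ := mul_comm _ _
  · simp only [G, hs, if_false, norm_zero]
    positivity

noncomputable def D (x : ℝ) (a : ℂ) (P : Polynomial ℂ) : Polynomial ℂ :=
  -(Polynomial.X * (1 + Polynomial.X)) * Polynomial.derivative P +
    (Polynomial.C (x : ℂ) * (Polynomial.X * (1 + Polynomial.X)) -
      Polynomial.C a * (1 + 2 * Polynomial.X)) * P

lemma hasDerivAt_G {x : ℝ} (hx : 0 < x) {a : ℂ} (ha : 0 < a.re) (P : Polynomial ℂ) (s : ℝ) :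
    HasDerivAt (G x a P) (G x a (D x a P) s) s := by
  rcases lt_trichotomy s 0 with hs | hs | hs
  · have h0 : G x a (D x a P) s = 0 := by simp [G, hs.not_gt]
    rw [h0]
    refine (hasDerivAt_const s (0 : ℂ)).congr_of_eventuallyEq ?_
    filter_upwards [gt_mem_nhds hs] with t ht
    simp [G, ht.not_gt]
  · subst hs
    have h0 : ∀ Q, G x a Q 0 = 0 := by simp [G]
    rw [h0]
    obtain ⟨C, hC⟩ := G_bound_sq hx ha P
    rw [hasDerivAt_iff_isLittleO]
    simp only [h0, sub_zero, smul_zero]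
    have h1 : (G x a P) =O[nhds 0] (fun s : ℝ => s ^ 2) := by
      refine Asymptotics.IsBigO.of_bound C (Filter.Eventually.of_forall fun t => ?_)
      simpa using hC t
    refine h1.trans_isLittleO ?_
    simpa using Asymptotics.isLittleO_pow_pow (𝕜 := ℝ) (m := 1) (n := 2) (by norm_num)
  · have hu := uu_pos hs
    have h1 : 0 < 1 + uu s := by linarith
    have du := hasDerivAt_uu hs
    have duc := du.ofReal_comp
    have dP : HasDerivAt (fun t => P.eval (uu t : ℂ))
        ((Polynomial.derivative P).eval (uu s : ℂ) * ((-(uu s * (1 + uu s)) : ℝ) : ℂ)) s :=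
      HasDerivAt.comp (h₂ := fun z : ℂ => P.eval z) (h := fun t : ℝ => (uu t : ℂ)) s
        (P.hasDerivAt (uu s : ℂ)) duc
    have dl := ((du.log hu.ne').add ((du.const_add 1).log h1.ne')).ofReal_comp
    have dphi := (((duc.const_mul (-(x : ℂ))).add (dl.const_mul a)).cexp)
    have hd := dP.mul dphi
    have heq : G x a P =ᶠ[nhds s] fun t => P.eval (uu t : ℂ) * phi x a t := by
      filter_upwards [lt_mem_nhds hs] with t ht
      simp [G, ht]
    refine HasDerivAt.congr_of_eventuallyEq ?_ heq
    have hd' : HasDerivAt (fun t => P.eval (uu t : ℂ) * phi x a t) _ s := hd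
    refine hd'.congr_deriv ?_
    have hu' : (uu s : ℂ) ≠ 0 := by exact_mod_cast hu.ne'
    have h1' : (1 + uu s : ℂ) ≠ 0 := by exact_mod_cast h1.ne'
    have e : (((-(uu s * (1 + uu s)) / uu s + -(uu s * (1 + uu s)) / (1 + uu s) : ℝ)) : ℂ)
        = -(1 + 2 * uu s) := by
      push_cast
      field_simp
      ring
    rw [e]
    simp only [Pi.add_apply]
    simp only [G, hs, if_true, D, phi]
    simp [-Complex.ofReal_add]
    push_cast
    ring

lemma deriv_G {x : ℝ} (hx : 0 < x) {a : ℂ} (ha : 0 < a.re) (P : Polynomial ℂ) :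
    deriv (G x a P) = G x a (D x a P) := funext fun s => (hasDerivAt_G hx ha P s).deriv

lemma differentiable_G {x : ℝ} (hx : 0 < x) {a : ℂ} (ha : 0 < a.re) (P : Polynomial ℂ) :
    Differentiable ℝ (G x a P) := fun s => (hasDerivAt_G hx ha P s).differentiableAt

lemma integrable_G {x : ℝ} (hx : 0 < x) {a : ℂ} (ha : 0 < a.re) (P : Polynomial ℂ) :
    Integrable (G x a P) := by
  obtain ⟨C, hC, h⟩ := G_bound hx ha P
  have h1 : IntegrableOn (G x a P) (Set.Ioi 0) := by
    refine Integrable.mono' ((integrableOn_exp_mul_Ioi (a := -a.re) (by linarith) 0).const_mul C)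
      (differentiable_G hx ha P).continuous.aestronglyMeasurable ?_
    exact (ae_restrict_iff' measurableSet_Ioi).mpr (Filter.Eventually.of_forall fun s hs => h s hs)
  refine (integrableOn_iff_integrable_of_support_subset ?_).mp h1
  intro s hs
  by_contra hn
  exact hs (by simp [G, show ¬ 0 < s from hn])

lemma norm_fourier_le (f : ℝ → ℂ) (w : ℝ) : ‖𝓕 f w‖ ≤ ∫ v, ‖f v‖ :=
  VectorFourier.norm_fourierIntegral_le_integral_norm _ _ _ _ _

lemma integrable_fourier_G {x : ℝ} (hx : 0 < x) {a : ℂ} (ha : 0 < a.re) (P : Polynomial ℂ) :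
    Integrable (𝓕 (G x a P)) := by
  have hd : ∀ Q, 𝓕 (G x a (D x a Q)) =
      fun w : ℝ => (2 * (Real.pi : ℂ) * Complex.I * (w : ℂ)) • 𝓕 (G x a Q) w := by
    intro Q
    rw [← deriv_G hx ha Q]
    exact Real.fourier_deriv (integrable_G hx ha Q) (differentiable_G hx ha Q)
      (by rw [deriv_G hx ha Q]; exact integrable_G hx ha _)
  set A := ∫ v, ‖G x a P v‖
  set B := ∫ v, ‖G x a (D x a (D x a P)) v‖
  have hc : Continuous (𝓕 (G x a P)) :=
    VectorFourier.fourierIntegral_continuous Real.continuous_fourierChar continuous_inner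
      (integrable_G hx ha P)
  refine Integrable.mono' (integrable_inv_one_add_sq.const_mul (A + B))
    hc.aestronglyMeasurable (Filter.Eventually.of_forall fun w => ?_)
  have h1 : ‖𝓕 (G x a P) w‖ ≤ A := norm_fourier_le _ _
  have h2 : ‖𝓕 (G x a (D x a (D x a P))) w‖ ≤ B := norm_fourier_le _ _
  rw [hd, hd] at h2
  simp only [norm_smul, norm_mul, Complex.norm_real, Complex.norm_I, Complex.norm_ofNat,
    Real.norm_eq_abs, abs_of_pos Real.pi_pos, mul_one] at h2
  have h3 : w ^ 2 * ‖𝓕 (G x a P) w‖ ≤ B := by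
    refine le_trans ?_ h2
    have e : 2 * Real.pi * |w| * (2 * Real.pi * |w| * ‖𝓕 (G x a P) w‖) =
        (2 * Real.pi) ^ 2 * (w ^ 2 * ‖𝓕 (G x a P) w‖) := by
      rw [← sq_abs w]
      ring
    rw [e]
    refine le_mul_of_one_le_left (by positivity) (one_le_pow₀ ?_)
    linarith [Real.pi_gt_three]
  rw [← div_eq_mul_inv, le_div_iff₀ (by positivity)]
  linarith

lemma parseval (f g : ℝ → ℂ) (hf : Integrable f) (hg : Integrable g) (hgc : Continuous g)
    (hg' : Integrable (𝓕 g)) : ∫ w, 𝓕 f w * 𝓕 g (-w) = ∫ s, f s * g s := by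
  have e : 𝓕⁻ g = fun w => 𝓕 g (-w) := funext fun w => Real.fourierInv_eq_fourier_neg g w
  have hi : Integrable (𝓕⁻ g) := by
    rw [e]
    exact hg'.comp_neg
  have h : ∫ ξ, 𝓕 f ξ * (𝓕⁻ g) ξ = ∫ s, f s * 𝓕 (𝓕⁻ g) s := by
    simpa using! VectorFourier.integral_fourierIntegral_smul_eq_flip (L := innerₗ ℝ)
      Real.continuous_fourierChar continuous_inner hf hi
  rw [hgc.fourier_fourierInv_eq hg hg', e] at h
  exact h

lemma integral_G (x : ℝ) (a : ℂ) (h : ℝ → ℂ) :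
    ∫ s, h s * G x a 1 s = ∫ s in Set.Ioi (0 : ℝ), h s * phi x a s := by
  rw [← integral_indicator measurableSet_Ioi]
  congr 1
  ext s
  by_cases hs : 0 < s <;> simp [G, Set.indicator, hs]

/-- The integrand identity. -/
lemma integrand (x : ℝ) (p q : ℂ) {s : ℝ} (hs : 0 < s) :
    ((uu s * (1 + uu s) : ℝ) : ℂ) * (Complex.exp (-(x : ℂ) * (uu s : ℝ)) *
      ((uu s : ℝ) : ℂ) ^ (p - 1) * ((1 : ℂ) + (uu s : ℝ)) ^ (q - 1)) =
    Complex.exp (-x * uu s + p * (Real.log (uu s) : ℝ) + q * (Real.log (1 + uu s) : ℝ)) := by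
  have hu := uu_pos hs
  have h1 : 0 < 1 + uu s := by linarith
  have hu' : (uu s : ℂ) ≠ 0 := by exact_mod_cast hu.ne'
  have h1' : (1 + uu s : ℂ) ≠ 0 := by exact_mod_cast h1.ne'
  rw [Complex.cpow_sub _ _ hu', Complex.cpow_sub _ _ h1', Complex.cpow_one, Complex.cpow_one,
    Complex.exp_add, Complex.exp_add, Complex.ofReal_log hu.le, Complex.ofReal_log h1.le,
    Complex.cpow_def_of_ne_zero hu', Complex.cpow_def_of_ne_zero h1']
  push_cast
  rw [mul_comm p, mul_comm q]
  field_simp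

lemma gamma_mul_hypU {a : ℂ} (ha : 0 < a.re) (b : ℂ) (x : ℝ) :
    Complex.Gamma a * hypU a b x = ∫ s in Set.Ioi (0 : ℝ),
      Complex.exp (-x * uu s + a * (Real.log (uu s) : ℝ) + (b - a) * (Real.log (1 + uu s) : ℝ)) := by
  unfold hypU
  rw [mul_inv_cancel_left₀ (Complex.Gamma_ne_zero_of_re_pos ha), change_var]
  exact setIntegral_congr_fun measurableSet_Ioi fun s hs => integrand x a (b - a) hs

lemma hypU_fourier {c : ℂ} (hc : 0 < c.re) (x t : ℝ) :
    Complex.Gamma ((c - Complex.I * t) / 2) * hypU ((c - Complex.I * t) / 2) c x =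
      𝓕 (G x (c / 2) 1) (-(t / (4 * Real.pi))) := by
  rw [gamma_mul_hypU (by simpa using hc), Real.fourier_real_eq_integral_exp_smul]
  simp only [smul_eq_mul]
  rw [integral_G]
  refine setIntegral_congr_fun measurableSet_Ioi fun s hs => ?_
  have hs' : 0 < s := hs
  simp only [phi]
  rw [← Complex.exp_add, log_one_add_uu hs']
  congr 1
  have : -2 * Real.pi * s * -(t / (4 * Real.pi)) = s * t / 2 := by
    have := Real.pi_pos.ne'
    field_simp
    ring
  rw [this]
  push_cast
  ring

end Magnus

/-- Magnus' 1946 integral addition theorem for `x, y > 0` real: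
`Γ(c) U(c,2c,x+y) = (1/(4π)) ∫_ℝ Γ((c-it)/2) Γ((c+it)/2) U((c-it)/2,c,x) U((c+it)/2,c,y) dt`. -/
theorem magnus_addition (c : ℂ) (x y : ℝ) (hc : 0 < c.re) (hx : 0 < x) (hy : 0 < y) :
    Complex.Gamma c * hypU c (2 * c) ((x : ℂ) + (y : ℂ)) =
      (1 / (4 * (Real.pi : ℂ))) *
        ∫ t : ℝ,
          Complex.Gamma ((c - Complex.I * t) / 2) * Complex.Gamma ((c + Complex.I * t) / 2) *
          hypU ((c - Complex.I * t) / 2) c (x : ℂ) * hypU ((c + Complex.I * t) / 2) c (y : ℂ) := by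
  have ha : 0 < (c / 2).re := by simpa using hc
  have key : ∀ t : ℝ, Complex.Gamma ((c - Complex.I * t) / 2) *
      Complex.Gamma ((c + Complex.I * t) / 2) *
      hypU ((c - Complex.I * t) / 2) c (x : ℂ) * hypU ((c + Complex.I * t) / 2) c (y : ℂ) =
      (fun w => 𝓕 (Magnus.G x (c / 2) 1) (-w) * 𝓕 (Magnus.G y (c / 2) 1) w)
        (t / (4 * Real.pi)) := by
    intro t
    have h1 := Magnus.hypU_fourier hc x t
    have h2 := Magnus.hypU_fourier hc y (-t)
    rw [show c - Complex.I * ((-t : ℝ) : ℂ) = c + Complex.I * t by push_cast; ring,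
      neg_div, neg_neg] at h2
    simp only
    rw [← h1, ← h2]
    ring
  simp only [key]
  rw [Measure.integral_comp_div (fun w => 𝓕 (Magnus.G x (c / 2) 1) (-w) *
    𝓕 (Magnus.G y (c / 2) 1) w)]
  have h3 := Magnus.parseval (Magnus.G x (c / 2) 1) (Magnus.G y (c / 2) 1)
    (Magnus.integrable_G hx ha 1) (Magnus.integrable_G hy ha 1)
    (Magnus.differentiable_G hy ha 1).continuous (Magnus.integrable_fourier_G hy ha 1)
  rw [← integral_neg_eq_self] at h3
  simp only [neg_neg] at h3
  rw [h3, Magnus.integral_G, ← Complex.ofReal_add, Magnus.gamma_mul_hypU hc,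
    abs_of_pos (by positivity), Complex.real_smul]
  have hpi : (Real.pi : ℂ) ≠ 0 := by exact_mod_cast Real.pi_pos.ne'
  push_cast
  rw [← mul_assoc, one_div, inv_mul_cancel₀ (by simp), one_mul]
  refine setIntegral_congr_fun measurableSet_Ioi fun s hs => ?_
  have hs' : 0 < s := hs
  simp only [Magnus.G, hs', if_true, Magnus.phi, Polynomial.eval_one, one_mul]
  rw [← Complex.exp_add]
  congr 1
  push_cast
  ring
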